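/- Let N ≥ 1 and let f : ℝ^N → ℝ be of class C² such that f and Δf are bounded and uniformly continuous on ℝ^N. Then ∇f is bounded and uniformly continuous on ℝ^N, and there is a constant C depending only on N (not on f) such that ‖∇f‖_{L^∞(ℝ^N)} ≤ C (‖f‖_{L^∞(ℝ^N)} + ‖Δf‖_{L^∞(ℝ^N)}). -/

import Mathlib

open MeasureTheory Real Set Filter

/-- The Laplacian of `f : ℝ^N → ℝ`, as the sum of the pure second partial derivatives. -/
noncomputable def lap (N : ℕ) (f : EuclideanSpace ℝ (Fin N) → ℝ)
    (x : EuclideanSpace ℝ (Fin N)) : ℝ :=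
  ∑ i : Fin N, iteratedFDeriv ℝ 2 f x ![EuclideanSpace.single i 1, EuclideanSpace.single i 1]

lemma second_diff_tendsto {E : Type*} [NormedAddCommGroup E] [NormedSpace ℝ E] (f : E → ℝ)
    (hf : ContDiff ℝ 2 f) (y e : E) :
    Tendsto (fun t : ℝ => (f (y + t • e) + f (y - t • e) - 2 * f y) / t ^ 2)
      (nhdsWithin 0 {0}ᶜ) (nhds (iteratedFDeriv ℝ 2 f y ![e, e])) := by
  have hd : Differentiable ℝ f := hf.differentiable (by norm_num)
  have hd2 : Differentiable ℝ (fderiv ℝ f) :=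
    (hf.fderiv_right (m := 1) (by norm_num)).differentiable (by norm_num)
  have l1 : ∀ t : ℝ, HasDerivAt (fun t : ℝ => y + t • e) e t := fun t => by
    simpa using ((hasDerivAt_id t).smul_const e).const_add y
  have l2 : ∀ t : ℝ, HasDerivAt (fun t : ℝ => y - t • e) (-e) t := fun t => by
    simpa using ((hasDerivAt_id t).smul_const e).const_sub y
  have h1 : ∀ t : ℝ, HasDerivAt (fun t : ℝ => f (y + t • e) + f (y - t • e) - 2 * f y)
      (fderiv ℝ f (y + t • e) e - fderiv ℝ f (y - t • e) e) t := fun t => by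
    have a := ((hd (y + t • e)).hasFDerivAt.comp_hasDerivAt t (l1 t))
    have b := ((hd (y - t • e)).hasFDerivAt.comp_hasDerivAt t (l2 t))
    have := (a.add b).sub_const (2 * f y)
    simp only [map_neg, ← sub_eq_add_neg] at this
    exact this
  have h2 : HasDerivAt (fun t : ℝ => fderiv ℝ f (y + t • e) e - fderiv ℝ f (y - t • e) e)
      (2 * fderiv ℝ (fderiv ℝ f) y e e) 0 := by
    have a : HasDerivAt (fun t : ℝ => fderiv ℝ f (y + t • e)) (fderiv ℝ (fderiv ℝ f) y e) 0 := by
      have hy : HasFDerivAt (fderiv ℝ f) (fderiv ℝ (fderiv ℝ f) y) (y + (0:ℝ) • e) := by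
        rw [zero_smul, add_zero]; exact (hd2 y).hasFDerivAt
      exact hy.comp_hasDerivAt (0:ℝ) (l1 0)
    have b : HasDerivAt (fun t : ℝ => fderiv ℝ f (y - t • e)) (fderiv ℝ (fderiv ℝ f) y (-e)) 0 := by
      have hy : HasFDerivAt (fderiv ℝ f) (fderiv ℝ (fderiv ℝ f) y) (y - (0:ℝ) • e) := by
        rw [zero_smul, sub_zero]; exact (hd2 y).hasFDerivAt
      exact hy.comp_hasDerivAt (0:ℝ) (l2 0)
    have ev : ∀ (G : ℝ → E →L[ℝ] ℝ) (G' : E →L[ℝ] ℝ), HasDerivAt G G' 0 →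
        HasDerivAt (fun t => G t e) (G' e) 0 := fun G G' hG => by
      simpa using hG.clm_apply (hasDerivAt_const (0:ℝ) e)
    have hab := (ev _ _ a).sub (ev _ _ b)
    have hval : 2 * fderiv ℝ (fderiv ℝ f) y e e =
        fderiv ℝ (fderiv ℝ f) y e e - fderiv ℝ (fderiv ℝ f) y (-e) e := by
      rw [map_neg, ContinuousLinearMap.neg_apply]; ring
    rw [hval]
    exact hab
  have h3 := h2.tendsto_slope_zero
  rw [iteratedFDeriv_two_apply]
  simp only [Matrix.cons_val_zero, Matrix.cons_val_one]
  refine HasDerivAt.lhopital_zero_nhdsNE (f := fun t : ℝ => f (y + t • e) + f (y - t • e) - 2 * f y)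
    (g := fun t : ℝ => t ^ 2) (g' := fun t => 2 * t)
    (Eventually.of_forall h1) (Eventually.of_forall fun t => ?_) ?_ ?_ ?_ ?_
  · simpa using hasDerivAt_pow 2 t
  · filter_upwards [self_mem_nhdsWithin] with t ht
    simpa using ht
  · have : Tendsto (fun t : ℝ => f (y + t • e) + f (y - t • e) - 2 * f y) (nhds 0)
      (nhds (f (y + (0:ℝ) • e) + f (y - (0:ℝ) • e) - 2 * f y)) := (h1 0).continuousAt
    have := this.mono_left (nhdsWithin_le_nhds (s := {0}ᶜ))
    convert this using 2
    simp; ring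
  · have : Tendsto (fun t : ℝ => t ^ 2) (nhds 0) (nhds ((0:ℝ) ^ 2)) := (continuous_pow 2).continuousAt
    have := this.mono_left (nhdsWithin_le_nhds (s := {0}ᶜ))
    simpa using this
  · have := h3.div_const 2
    simp only [zero_add, zero_smul, add_zero, sub_zero, sub_self, smul_eq_mul] at this
    convert this using 2
    · rename_i t
      rw [inv_mul_eq_div, div_div, mul_comm t 2]
    · ring

lemma lap_tendsto (N : ℕ) (f : EuclideanSpace ℝ (Fin N) → ℝ) (hf : ContDiff ℝ 2 f)
    (y : EuclideanSpace ℝ (Fin N)) :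
    Tendsto (fun t : ℝ => (∑ j, (f (y + t • EuclideanSpace.single j 1) +
      f (y - t • EuclideanSpace.single j 1) - 2 * f y)) / t ^ 2)
      (nhdsWithin 0 {0}ᶜ) (nhds (lap N f y)) := by
  simp only [Finset.sum_div]
  exact tendsto_finsetSum _ fun j _ => second_diff_tendsto f hf y _

/-- The comparison function. -/
noncomputable def psi (N : ℕ) (i : Fin N) (M F : ℝ) (x : EuclideanSpace ℝ (Fin N)) : ℝ :=
  2 * M * (∑ j, x j ^ 2 + N * (x i - x i ^ 2)) + F / 2 * (x i - x i ^ 2)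

lemma psi_sd (N : ℕ) (i : Fin N) (M F : ℝ) (x : EuclideanSpace ℝ (Fin N)) (t : ℝ) :
    ∑ j, (psi N i M F (x + t • EuclideanSpace.single j 1) +
      psi N i M F (x - t • EuclideanSpace.single j 1) - 2 * psi N i M F x) = - F * t ^ 2 := by
  have key : ∀ j, psi N i M F (x + t • EuclideanSpace.single j 1) +
      psi N i M F (x - t • EuclideanSpace.single j 1) - 2 * psi N i M F x
      = 4 * M * t ^ 2 + if i = j then (- (4 * M * N) - F) * t ^ 2 else 0 := by
    intro j
    have hs : ∑ k, (x + t • EuclideanSpace.single j (1:ℝ)) k ^ 2 +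
        ∑ k, (x - t • EuclideanSpace.single j (1:ℝ)) k ^ 2 = 2 * ∑ k, x k ^ 2 + 2 * t ^ 2 := by
      rw [← Finset.sum_add_distrib]
      have : ∀ k, (x + t • EuclideanSpace.single j (1:ℝ)) k ^ 2 +
        (x - t • EuclideanSpace.single j (1:ℝ)) k ^ 2
          = 2 * x k ^ 2 + if k = j then 2 * t ^ 2 else 0 := by
        intro k
        by_cases h : k = j <;> simp [h] <;> ring
      simp only [this, Finset.sum_add_distrib, ← Finset.mul_sum]
      simp
    unfold psi
    by_cases h : i = j
    · subst h
      simp only [if_true]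
      have a1 : (x + t • EuclideanSpace.single i (1:ℝ)) i = x i + t := by simp
      have a2 : (x - t • EuclideanSpace.single i (1:ℝ)) i = x i - t := by simp
      rw [a1, a2]
      linear_combination (2 * M) * hs
    · simp only [h, if_false]
      have a1 : (x + t • EuclideanSpace.single j (1:ℝ)) i = x i := by simp [h]
      have a2 : (x - t • EuclideanSpace.single j (1:ℝ)) i = x i := by simp [h]
      rw [a1, a2]
      linear_combination (2 * M) * hs
  simp only [key, Finset.sum_add_distrib]
  simp
  ring

/-- reflection -/
noncomputable def reflct (N : ℕ) (i : Fin N) (x : EuclideanSpace ℝ (Fin N)) :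
    EuclideanSpace ℝ (Fin N) := x - (2 * x i) • EuclideanSpace.single i 1

lemma f_rfl (N : ℕ) (i j : Fin N) (f : EuclideanSpace ℝ (Fin N) → ℝ)
    (x₀ p : EuclideanSpace ℝ (Fin N)) (t : ℝ) :
    f (x₀ + reflct N i (p + t • EuclideanSpace.single j 1)) +
    f (x₀ + reflct N i (p - t • EuclideanSpace.single j 1)) =
    f ((x₀ + reflct N i p) + t • EuclideanSpace.single j 1) +
    f ((x₀ + reflct N i p) - t • EuclideanSpace.single j 1) := by
  by_cases h : i = j
  · subst h
    rw [add_comm]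
    congr 2
    · simp [reflct]; module
    · simp [reflct]; module
  · congr 2
    · simp [reflct, h]; module
    · simp [reflct, h]; module

lemma comparison (N : ℕ) (i : Fin N) (f : EuclideanSpace ℝ (Fin N) → ℝ) (hf : ContDiff ℝ 2 f)
    (M L F : ℝ) (hM : ∀ x, |f x| ≤ M) (hL : ∀ x, |lap N f x| ≤ L) (hF : 2 * L < F)
    (x₀ x : EuclideanSpace ℝ (Fin N)) (hx0 : 0 ≤ x i) (hx : ∀ j, |x j| ≤ 1) :
    f (x₀ + x) - f (x₀ + reflct N i x) ≤ psi N i M F x := by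
  have hM0 : 0 ≤ M := (abs_nonneg _).trans (hM 0)
  have hL0 : 0 ≤ L := (abs_nonneg _).trans (hL 0)
  have hfc : Continuous f := hf.continuous
  set K : Set (EuclideanSpace ℝ (Fin N)) := {x | 0 ≤ x i ∧ ∀ j, |x j| ≤ 1} with hK
  have hKc : IsCompact K := by
    apply Metric.isCompact_of_isClosed_isBounded
    · have k1 : IsClosed {x : EuclideanSpace ℝ (Fin N) | 0 ≤ x i} :=
        isClosed_le (by fun_prop) (by fun_prop)
      have k2 : IsClosed {x : EuclideanSpace ℝ (Fin N) | ∀ j, |x j| ≤ 1} := by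
        simp only [Set.setOf_forall]
        exact isClosed_iInter fun j => isClosed_le (by fun_prop) (by fun_prop)
      exact k1.inter k2
    · refine (Metric.isBounded_closedBall (x := 0) (r := √ N)).subset ?_
      rintro z ⟨-, hz⟩
      rw [mem_closedBall_zero_iff, EuclideanSpace.norm_eq]
      apply Real.sqrt_le_sqrt
      calc ∑ j, ‖z j‖ ^ 2 ≤ ∑ j : Fin N, (1:ℝ) := by
            refine Finset.sum_le_sum fun j _ => ?_
            have := hz j
            rw [Real.norm_eq_abs]
            exact pow_le_one₀ (abs_nonneg _) this
        _ = N := by simp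
  set v : EuclideanSpace ℝ (Fin N) → ℝ :=
    fun x => f (x₀ + x) - f (x₀ + reflct N i x) - psi N i M F x with hv
  have hvc : Continuous v := by
    simp only [hv]; unfold reflct psi; fun_prop
  obtain ⟨p, hpK, hp⟩ := hKc.exists_isMaxOn ⟨x, hx0, hx⟩ hvc.continuousOn
  have hvx : v x ≤ v p := hp ⟨hx0, hx⟩
  suffices v p ≤ 0 by
    have : v x ≤ 0 := hvx.trans this
    simp only [hv] at this
    linarith
  by_contra! hpos
  have hphi : f (x₀ + p) - f (x₀ + reflct N i p) ≤ 2 * M := by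
    have h1 := abs_le.1 (hM (x₀ + p))
    have h2 := abs_le.1 (hM (x₀ + reflct N i p))
    linarith
  have hpi : p i ≤ 1 := (abs_le.1 (hpK.2 i)).2
  have hpp : 0 ≤ p i - p i ^ 2 := by nlinarith [hpK.1]
  have hnn : 0 ≤ F / 2 * (p i - p i ^ 2) := mul_nonneg (by linarith) hpp
  have hpsi : 2 * M * ∑ j, p j ^ 2 ≤ psi N i M F p := by
    unfold psi
    have : 0 ≤ 2 * M * (N * (p i - p i ^ 2)) := by positivity
    linarith
  have hp0 : 0 < p i := by
    refine lt_of_le_of_ne hpK.1 fun h => ?_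
    have h1 : reflct N i p = p := by simp [reflct, ← h]
    have h2 : 0 ≤ 2 * M * ∑ j, p j ^ 2 := by positivity
    simp only [hv, h1] at hpos
    linarith
  have hp1 : ∀ j, |p j| < 1 := by
    intro j
    refine lt_of_le_of_ne (hpK.2 j) fun h => ?_
    have h1 : p j ^ 2 ≤ ∑ j, p j ^ 2 :=
      Finset.single_le_sum (f := fun j => p j ^ 2) (fun j _ => sq_nonneg _) (Finset.mem_univ j)
    rw [← sq_abs, h] at h1
    simp only [hv] at hpos
    nlinarith
  have hU : ∀ᶠ y in nhds p, v y ≤ v p := by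
    have e1 : ∀ᶠ y : EuclideanSpace ℝ (Fin N) in nhds p, 0 < y i :=
      (isOpen_lt (by fun_prop) (by fun_prop)).mem_nhds hp0
    have e2 : ∀ᶠ y : EuclideanSpace ℝ (Fin N) in nhds p, ∀ j, |y j| < 1 :=
      eventually_all.2 fun j => (isOpen_lt (by fun_prop) (by fun_prop)).mem_nhds (hp1 j)
    filter_upwards [e1, e2] with y h1 h2
    exact hp ⟨h1.le, fun j => (h2 j).le⟩
  have hE : ∀ᶠ t : ℝ in nhds 0, ∀ j, v (p + t • EuclideanSpace.single j 1) ≤ v p ∧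
      v (p - t • EuclideanSpace.single j 1) ≤ v p := by
    refine eventually_all.2 fun j => ?_
    have c1 : Tendsto (fun t : ℝ => p + t • EuclideanSpace.single j (1:ℝ)) (nhds 0) (nhds p) := by
      have : Continuous (fun t : ℝ => p + t • EuclideanSpace.single j (1:ℝ)) := by fun_prop
      simpa using this.tendsto 0
    have c2 : Tendsto (fun t : ℝ => p - t • EuclideanSpace.single j (1:ℝ)) (nhds 0) (nhds p) := by
      have : Continuous (fun t : ℝ => p - t • EuclideanSpace.single j (1:ℝ)) := by fun_prop
      simpa using this.tendsto 0
    exact (c1.eventually hU).and (c2.eventually hU)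
  have T := (lap_tendsto N f hf (x₀ + p)).sub (lap_tendsto N f hf (x₀ + reflct N i p))
  have hle : lap N f (x₀ + p) - lap N f (x₀ + reflct N i p) ≤ -F := by
    refine le_of_tendsto T ?_
    filter_upwards [self_mem_nhdsWithin, hE.filter_mono nhdsWithin_le_nhds] with t ht htE
    have ht2 : 0 < t ^ 2 := by
      have : t ≠ 0 := ht
      positivity
    rw [← sub_div, div_le_iff₀ ht2, ← psi_sd N i M F p t, ← Finset.sum_sub_distrib]
    refine Finset.sum_le_sum fun j _ => ?_
    obtain ⟨q1, q2⟩ := htE j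
    have q3 := f_rfl N i j f x₀ p t
    simp only [hv] at q1 q2
    rw [add_assoc x₀ p, add_sub_assoc x₀ p]
    linarith
  have h1 := abs_le.1 (hL (x₀ + p))
  have h2 := abs_le.1 (hL (x₀ + reflct N i p))
  linarith

lemma partial_le (N : ℕ) (i : Fin N) (f : EuclideanSpace ℝ (Fin N) → ℝ) (hf : ContDiff ℝ 2 f)
    (M L : ℝ) (hM : ∀ x, |f x| ≤ M) (hL : ∀ x, |lap N f x| ≤ L)
    (x₀ : EuclideanSpace ℝ (Fin N)) :
    fderiv ℝ f x₀ (EuclideanSpace.single i 1) ≤ N * M + L := by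
  have hM0 : 0 ≤ M := (abs_nonneg _).trans (hM 0)
  have hL0 : 0 ≤ L := (abs_nonneg _).trans (hL 0)
  have hN : (1:ℝ) ≤ N := by exact_mod_cast (Nat.one_le_iff_ne_zero.2 (by rintro rfl; exact i.elim0))
  refine le_of_forall_pos_le_add fun ε hε => ?_
  set e : EuclideanSpace ℝ (Fin N) := EuclideanSpace.single i 1 with he
  have hd : Differentiable ℝ f := hf.differentiable (by norm_num)
  have l1 : HasDerivAt (fun t : ℝ => x₀ + t • e) e 0 := by
    simpa using ((hasDerivAt_id (0:ℝ)).smul_const e).const_add x₀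
  have l2 : HasDerivAt (fun t : ℝ => x₀ - t • e) (-e) 0 := by
    simpa using ((hasDerivAt_id (0:ℝ)).smul_const e).const_sub x₀
  have h1 : HasDerivAt (fun t : ℝ => f (x₀ + t • e) - f (x₀ - t • e)) (2 * fderiv ℝ f x₀ e) 0 := by
    have hy1 : HasFDerivAt f (fderiv ℝ f x₀) (x₀ + (0:ℝ) • e) := by
      rw [zero_smul, add_zero]; exact (hd x₀).hasFDerivAt
    have hy2 : HasFDerivAt f (fderiv ℝ f x₀) (x₀ - (0:ℝ) • e) := by
      rw [zero_smul, sub_zero]; exact (hd x₀).hasFDerivAt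
    have hab := (hy1.comp_hasDerivAt (0:ℝ) l1).sub (hy2.comp_hasDerivAt (0:ℝ) l2)
    have hval : 2 * fderiv ℝ f x₀ e = fderiv ℝ f x₀ e - fderiv ℝ f x₀ (-e) := by
      rw [map_neg]; ring
    rw [hval]
    exact hab
  have h2 := h1.tendsto_slope_zero_right
  have h3 : 2 * fderiv ℝ f x₀ e ≤ 2 * M * N + (2 * L + ε) / 2 := by
    refine le_of_tendsto h2 ?_
    filter_upwards [Ioo_mem_nhdsGT (zero_lt_one (α := ℝ))] with t ht
    have hc := comparison N i f hf M L (2 * L + ε) hM hL (by linarith) x₀ (t • e)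
      (by simp [he, ht.1.le]) (fun j => by
        by_cases h : j = i
        · subst h; simp [he, abs_of_pos ht.1, ht.2.le]
        · simp [he, h])
    have r : reflct N i (t • e) = - (t • e) := by
      simp [reflct, he]; module
    have s : ∑ j, (t • e) j ^ 2 = t ^ 2 := by
      simp [he, ite_pow]
    have u : (t • e) i = t := by simp [he]
    rw [r, ← sub_eq_add_neg, psi, s, u] at hc
    simp only [zero_add, zero_smul, add_zero, sub_zero, sub_self, smul_eq_mul]
    rw [inv_mul_le_iff₀ ht.1]
    refine hc.trans ?_
    have w1 : 0 ≤ M * (N - 1) * t ^ 2 := mul_nonneg (mul_nonneg hM0 (by linarith)) (sq_nonneg t)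
    have w2 : 0 ≤ (2 * L + ε) * t ^ 2 := by positivity
    nlinarith
  linarith

lemma lap_neg (N : ℕ) (f : EuclideanSpace ℝ (Fin N) → ℝ) (x) : lap N (-f) x = - lap N f x := by
  simp [lap, iteratedFDeriv_neg]

lemma grad_le (N : ℕ) (f : EuclideanSpace ℝ (Fin N) → ℝ) (hf : ContDiff ℝ 2 f)
    (M L : ℝ) (hM : ∀ x, |f x| ≤ M) (hL : ∀ x, |lap N f x| ≤ L)
    (x₀ : EuclideanSpace ℝ (Fin N)) :
    ‖gradient f x₀‖ ≤ N * (N + 1) * (M + L) := by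
  have hM0 : 0 ≤ M := (abs_nonneg _).trans (hM 0)
  have hL0 : 0 ≤ L := (abs_nonneg _).trans (hL 0)
  have hi : ∀ i, |gradient f x₀ i| ≤ N * M + L := by
    intro i
    have h0 : gradient f x₀ i = fderiv ℝ f x₀ (EuclideanSpace.single i 1) := by
      have := InnerProductSpace.toDual_symm_apply (𝕜 := ℝ) (x := EuclideanSpace.single i (1:ℝ))
        (y := fderiv ℝ f x₀)
      rw [← this, EuclideanSpace.inner_single_right]
      simp [gradient]
    rw [h0, abs_le]
    have a := partial_le N i f hf M L hM hL x₀
    have b := partial_le N i (-f) hf.neg M L (by simpa using hM)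
      (by simpa [lap_neg] using hL) x₀
    rw [fderiv_neg] at b
    simp at b
    constructor <;> linarith
  have h1 : ‖gradient f x₀‖ ≤ ∑ i, |gradient f x₀ i| := by
    rw [EuclideanSpace.norm_eq]
    apply Real.sqrt_le_iff.2 ⟨by positivity, ?_⟩
    exact Finset.sum_sq_le_sq_sum_of_nonneg fun i _ => abs_nonneg _
  calc _ ≤ _ := h1
    _ ≤ ∑ i : Fin N, (N * M + L) := Finset.sum_le_sum fun i _ => hi i
    _ = N * (N * M + L) := by simp; ring
    _ ≤ _ := by
      have hN : (0:ℝ) ≤ N := by positivity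
      have : 0 ≤ N * (M + N * L) := by positivity
      nlinarith

lemma lap_diff (N : ℕ) (f : EuclideanSpace ℝ (Fin N) → ℝ) (hf : ContDiff ℝ 2 f) (h x) :
    lap N (fun x => f (x + h) - f x) x = lap N f (x + h) - lap N f x := by
  have hg : ContDiff ℝ 2 (fun x => f (x + h)) := hf.comp (contDiff_id.add contDiff_const)
  refine tendsto_nhds_unique (lap_tendsto N _ (hg.sub hf) x) ?_
  convert (lap_tendsto N f hf (x + h)).sub (lap_tendsto N f hf x) using 2
  rename_i t
  rw [← sub_div, ← Finset.sum_sub_distrib]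
  congr 1
  refine Finset.sum_congr rfl fun j _ => ?_
  rw [add_right_comm x _ h, sub_add_eq_add_sub x _ h]
  ring

/-- Lemma C.4.  There is a constant `C` depending only on `N` such that
for every `C²` function `f : ℝ^N → ℝ` with `f` and `Δf` bounded and uniformly continuous,
`∇f` is bounded and uniformly continuous and
`‖∇f‖_{L^∞} ≤ C(‖f‖_{L^∞} + ‖Δf‖_{L^∞})`. -/
theorem stmt16 (N : ℕ) (hN : 1 ≤ N) :
    ∃ C : ℝ, ∀ f : EuclideanSpace ℝ (Fin N) → ℝ, ContDiff ℝ 2 f →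
      UniformContinuous f → UniformContinuous (lap N f) →
      ∀ Cf CΔ : ℝ, (∀ x, |f x| ≤ Cf) → (∀ x, |lap N f x| ≤ CΔ) →
        UniformContinuous (fun x => gradient f x) ∧
        ∀ x, ‖gradient f x‖ ≤ C * (Cf + CΔ) := by
  refine ⟨N * (N + 1), fun f hf huf hul Cf CΔ hCf hCΔ => ⟨?_, grad_le N f hf Cf CΔ hCf hCΔ⟩⟩
  rw [Metric.uniformContinuous_iff] at huf hul ⊢
  intro ε hε
  have hNN : (0:ℝ) < N * (N + 1) := by
    have : (0:ℝ) < N := by exact_mod_cast hN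
    positivity
  set η : ℝ := ε / (N * (N + 1)) / 4 with hη
  have hη0 : 0 < η := by positivity
  obtain ⟨δ₁, h1, H1⟩ := huf η hη0
  obtain ⟨δ₂, h2, H2⟩ := hul η hη0
  refine ⟨min δ₁ δ₂, lt_min h1 h2, fun {a b} hab => ?_⟩
  have hg : ContDiff ℝ 2 (fun x => f (x + (a - b))) := hf.comp (contDiff_id.add contDiff_const)
  have hdist : ∀ x, dist (x + (a - b)) x < min δ₁ δ₂ := fun x => by
    rwa [dist_eq_norm, add_sub_cancel_left, ← dist_eq_norm]
  have key := grad_le N (fun x => f (x + (a - b)) - f x) (hg.sub hf) η η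
    (fun x => (H1 ((hdist x).trans_le (min_le_left _ _))).le)
    (fun x => by
      rw [lap_diff N f hf]
      exact (H2 ((hdist x).trans_le (min_le_right _ _))).le) b
  have hgr : gradient (fun x => f (x + (a - b)) - f x) b = gradient f a - gradient f b := by
    unfold gradient
    rw [← map_sub]
    congr 1
    rw [fderiv_fun_sub (hg.differentiable (by norm_num) b) (hf.differentiable (by norm_num) b),
      fderiv_comp_add_right]
    simp
  rw [hgr] at key
  rw [dist_eq_norm]
  refine key.trans_lt ?_
  have : (N:ℝ) * (N + 1) * (η + η) = ε / 2 := by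
    rw [hη]; field_simp; ring
  linarith
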